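/- Let G be a rooted tree on n nodes, and let T and S be sibling subtrees of G that are weakly-complete k-ary trees. Suppose a push-up operation moves a leaf from the last level of T to the last level of S, where T has height h₂ before the move and S has height h₁ after the move, with h₂ > h₁. If |V(T)| + |V(S)| ≤ n/(9k), then the push-up operation strictly decreases the total distance of G under the finite uniform workload. -/

import Mathlib

/-!
Deleting the edge above a subtree of size `s` splits a tree with `n` nodes into parts of sizes `s`
and `n - s`, so the total distance is `∑ 2 * s * (n - s)` over all subtrees
(`KTree.totalDistUniform_eq`). This is proved by building the tree up through bridges: the
distances in two graphs joined by a bridge are determined by those in the two graphs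
(`KTree.Bridge`).

Moving the leaf `u` from `T` to its sibling `S` changes only the sizes of the subtrees of `T` and
`S` that contain `u`: those in `T` shrink by one, those in `S` grow by one. Adding one to `s`
changes `s * (n - s)` by `n - 1 - 2 * s` (`KTree.attachLeaf_cost`), so the total distance drops by
twice `(h₂ - h₁) * (n - 1) - 2 * a + 2 * b`, where `a` and `b` are the sums of the subtree sizes
along the paths from the roots of `T` and `S`, with `u` removed, to the parent of `u`.

For `k ≥ 2` a tree of height `m` has at most `2 * k ^ m` nodes, so `a` is bounded by a geometric
sum, at most `4 * k ^ h₂`. Level `h₂ - 1` of `T` is full, so this is at most `4 * k * |T|`, and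
`n ≥ 9 * k * (|T| + |S|)` makes the drop positive. For `k = 1`, both `T` and `S` are paths; `a` is
quadratic in `h₂`, but `b` cancels all of it except a multiple of `h₂ - h₁` that the size
hypothesis controls (`KTree.path_inequality`).
-/

inductive KTree : Type where
  | node : ℕ → List KTree → KTree

namespace KTree

instance : Inhabited KTree := ⟨node 0 []⟩

def rootKey : KTree → ℕ
  | node x _ => x

def children : KTree → List KTree
  | node _ cs => cs

def keys : KTree → List ℕ
  | node x cs => x :: (cs.attach.map (fun c => c.1.keys)).flatten
decreasing_by
  have := List.sizeOf_lt_of_mem c.2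
  simp only [KTree.node.sizeOf_spec]
  omega

def size (t : KTree) : ℕ := t.keys.length

def height : KTree → ℕ
  | node _ cs => (cs.attach.map (fun c => c.1.height + 1)).foldr max 0
decreasing_by
  have := List.sizeOf_lt_of_mem c.2
  simp only [KTree.node.sizeOf_spec]
  omega

def countAt : KTree → ℕ → ℕ
  | node _ _, 0 => 1
  | node _ cs, d + 1 => ((cs.attach.map (fun c => c.1.countAt d)).foldr (· + ·) 0)

def countsAt : KTree → ℕ → List ℕ
  | node _ cs, 0 => [cs.length]
  | node _ cs, d + 1 => (cs.attach.map (fun c => c.1.countsAt d)).flatten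

def edges : KTree → List (ℕ × ℕ)
  | node x cs => (cs.map fun c => (x, c.rootKey)) ++ (cs.attach.map (fun c => c.1.edges)).flatten
decreasing_by
  have := List.sizeOf_lt_of_mem c.2
  simp only [KTree.node.sizeOf_spec]
  omega

def graph (t : KTree) : SimpleGraph ℕ :=
  SimpleGraph.fromRel (fun a b => (a, b) ∈ t.edges)

noncomputable def dist (t : KTree) (u v : ℕ) : ℕ := t.graph.dist u v

noncomputable def totalDist (t : KTree) (D : ℕ → ℕ → ℕ) : ℕ :=
  ∑ u ∈ t.keys.toFinset, ∑ v ∈ t.keys.toFinset, t.dist u v * D u v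

noncomputable def totalDistUniform (t : KTree) : ℕ :=
  ∑ u ∈ t.keys.toFinset, ∑ v ∈ t.keys.toFinset, t.dist u v

def DegLE (k : ℕ) : KTree → Prop
  | node _ cs => cs.length ≤ k ∧ ∀ c ∈ cs, DegLE k c

def Separated : KTree → Prop
  | node _ cs =>
      (cs.Pairwise fun a b =>
        (∀ u ∈ a.keys, ∀ v ∈ b.keys, u < v) ∨ (∀ u ∈ a.keys, ∀ v ∈ b.keys, v < u)) ∧
      ∀ c ∈ cs, Separated c

def IsKAST (k i j : ℕ) (t : KTree) : Prop :=
  t.DegLE k ∧ t.Separated ∧ t.keys.Nodup ∧ ∀ m, m ∈ t.keys ↔ m ∈ Finset.Icc i j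

def WeaklyComplete (k : ℕ) (t : KTree) : Prop :=
  t.DegLE k ∧ ∀ d, d < t.height → t.countAt d = k ^ d

def subtreeAt : KTree → List ℕ → Option KTree
  | t, [] => some t
  | node _ cs, i :: is =>
    match cs[i]? with
    | some c => subtreeAt c is
    | none => none

def replaceAt : KTree → List ℕ → KTree → KTree
  | _, [], r => r
  | node x cs, i :: is, r => node x (cs.set i (replaceAt (cs.getD i default) is r))

def attachLeaf : KTree → List ℕ → ℕ → KTree
  | node x cs, [], u => node x (cs ++ [node u []])
  | node x cs, i :: is, u => node x (cs.set i (attachLeaf (cs.getD i default) is u))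

def IsSubtreeOf (s t : KTree) : Prop := ∃ pos, subtreeAt t pos = some s

def graphAvoiding (t : KTree) (c : ℕ) : SimpleGraph ℕ :=
  SimpleGraph.fromRel (fun a b => (a, b) ∈ t.edges ∧ a ≠ c ∧ b ≠ c)

def IsCentroid (t : KTree) (c : ℕ) : Prop :=
  c ∈ t.keys ∧ ∀ w ∈ t.keys, w ≠ c →
    2 * {w' | w' ∈ t.keys ∧ (t.graphAvoiding c).Reachable w w'}.ncard ≤ t.size

def uniformDemand : ℕ → ℕ → ℕ := fun u v => if u = v then 0 else 1

def IsOptimal (k n : ℕ) (T : KTree) : Prop :=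
  IsKAST k 1 n T ∧ ∀ T' : KTree, IsKAST k 1 n T' → totalDistUniform T ≤ totalDistUniform T'

def truncate : ℕ → KTree → KTree
  | 0, node x _ => node x []
  | d + 1, node x cs => node x (cs.attach.map (fun c => truncate d c.1))

def LastLevelPartial (k : ℕ) (t : KTree) : Prop :=
  1 ≤ t.height ∧ 0 < t.countAt t.height ∧ t.countAt t.height < k * t.countAt (t.height - 1)

def Packed (k : ℕ) (t : KTree) : Prop :=
  ∀ i j : ℕ, i < j → 0 < (t.countsAt (t.height - 1)).getD j 0 →
    (t.countsAt (t.height - 1)).getD i 0 = k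

def Reorder : KTree → KTree → Prop
  | node x cs, node y ds =>
      x = y ∧ ∃ e : Fin cs.length ≃ Fin ds.length,
        ∀ i : Fin cs.length, Reorder cs[i] ds[e i]
termination_by t _ => sizeOf t
decreasing_by
  have h1 : cs[i] ∈ cs := List.getElem_mem _
  have := List.sizeOf_lt_of_mem h1
  simp only [KTree.node.sizeOf_spec]
  omega

def IsQuasiOptimal (k n : ℕ) (t : KTree) : Prop :=
  t.keys.Nodup ∧ (∀ m, m ∈ t.keys ↔ m ∈ Finset.Icc 1 n) ∧
  t.children.length = k + 1 ∧
  (∀ c ∈ t.children, WeaklyComplete k c) ∧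
  (∀ d, 0 < d → d < t.height → t.countAt d = (k + 1) * k ^ (d - 1)) ∧
  Packed k t

end KTree

open KTree

namespace KTree

/-! ### Unfolding lemmas and induction principles -/

/-- Every tree is built from one-node trees by hanging one tree below the root of another. -/
theorem ind {p : KTree → Prop} (h0 : ∀ x, p (node x []))
    (h1 : ∀ x c cs, p c → p (node x cs) → p (node x (c :: cs))) : ∀ t, p t
  | node x [] => h0 x
  | node x (c :: cs) => h1 x c cs (ind h0 h1 c) (ind h0 h1 (node x cs))

theorem indMem {p : KTree → Prop}
    (h : ∀ x cs, (∀ c ∈ cs, p c) → p (node x cs)) : ∀ t, p t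
  | node x cs => h x cs (fun c _ => indMem h c)

theorem keys_node (x : ℕ) (cs : List KTree) :
    (node x cs).keys = x :: (cs.map keys).flatten := by
  rw [keys, List.attach_map_val (f := keys)]

theorem keys_cons (x : ℕ) (c : KTree) (cs : List KTree) :
    (node x (c :: cs)).keys = x :: (c.keys ++ (cs.map keys).flatten) := by
  simp [keys_node]

theorem size_node (x : ℕ) (cs : List KTree) :
    (node x cs).size = 1 + (cs.map size).sum := by
  simp only [size, keys_node, List.length_cons, List.length_flatten, List.map_map,
    Function.comp_def]
  exact add_comm _ _

theorem height_node (x : ℕ) (cs : List KTree) :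
    (node x cs).height = (cs.map (fun c => c.height + 1)).foldr max 0 := by
  rw [height, List.attach_map_val (f := fun c : KTree => c.height + 1)]

theorem countAt_zero (t : KTree) : t.countAt 0 = 1 := by
  cases t; rw [countAt]

theorem countAt_node (x : ℕ) (cs : List KTree) (d : ℕ) :
    (node x cs).countAt (d + 1) = (cs.map (fun c => c.countAt d)).sum := by
  rw [countAt, List.attach_map_val (f := fun c : KTree => c.countAt d)]; rfl

theorem mem_edges_cons (x : ℕ) (c : KTree) (cs : List KTree) (e : ℕ × ℕ) :
    e ∈ (node x (c :: cs)).edges ↔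
      e = (x, c.rootKey) ∨ e ∈ (node x cs).edges ∨ e ∈ c.edges := by
  simp only [edges, List.attach_map_val (f := edges), List.map_cons, List.flatten_cons,
    List.mem_append, List.mem_cons]
  tauto

theorem size_pos (t : KTree) : 0 < t.size := by
  cases t; rw [size_node]; omega

theorem rootKey_mem (t : KTree) : t.rootKey ∈ t.keys := by
  cases t; simp [keys_node, rootKey]

theorem edges_subset (t : KTree) : ∀ a b, (a, b) ∈ t.edges → a ∈ t.keys ∧ b ∈ t.keys := by
  induction t using ind with
  | h0 x => simp [edges]
  | h1 x c cs ihc ihcs =>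
    intro a b h
    rw [mem_edges_cons] at h
    have hr := rootKey_mem c
    rcases h with h | h | h
    · obtain ⟨rfl, rfl⟩ := Prod.mk.inj h
      simp [keys_cons, hr]
    · have := ihcs a b h
      simp only [keys_node, List.map_cons, List.flatten_cons, List.mem_cons,
        List.mem_append] at this ⊢
      tauto
    · have := ihc a b h
      simp only [keys_cons, List.mem_cons, List.mem_append] at this ⊢
      tauto

theorem graph_adj (t : KTree) (a b : ℕ) :
    t.graph.Adj a b ↔ a ≠ b ∧ ((a, b) ∈ t.edges ∨ (b, a) ∈ t.edges) := by
  simp [graph]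

/-! ### Distances in two graphs joined by a bridge -/

/-- A function that grows by at most one along each edge bounds distances from below. -/
theorem edist_potential {V : Type*} (H : SimpleGraph V) (f : V → ℕ∞)
    (hf : ∀ a b, H.Adj a b → f b ≤ f a + 1) (u v : V) : f v ≤ f u + H.edist u v := by
  by_cases h : H.edist u v = ⊤
  · simp [h]
  obtain ⟨p, hp⟩ := SimpleGraph.exists_walk_of_edist_ne_top h
  rw [← hp]
  clear hp h
  induction p with
  | nil => simp
  | cons hadj p ih =>
    refine ih.trans ?_
    rw [SimpleGraph.Walk.length_cons]
    push_cast
    calc _ ≤ (f _ + 1) + (p.length : ℕ∞) := by gcongr; exact hf _ _ hadj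
      _ = _ := by ring

/-- `H` is the disjoint union of `G₁`, living on `V₁`, and `G₂`, living on `V₂`, together with
the bridge `xy`. -/
structure Bridge {V : Type*} (G₁ G₂ H : SimpleGraph V) (V₁ V₂ : Set V) (x y : V) : Prop where
  disj : Disjoint V₁ V₂
  hx : x ∈ V₁
  hy : y ∈ V₂
  h₁ : ∀ a b, G₁.Adj a b → a ∈ V₁ ∧ b ∈ V₁
  h₂ : ∀ a b, G₂.Adj a b → a ∈ V₂ ∧ b ∈ V₂
  adj : ∀ a b, H.Adj a b ↔ G₁.Adj a b ∨ G₂.Adj a b ∨ (a = x ∧ b = y) ∨ (a = y ∧ b = x)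

namespace Bridge

variable {V : Type*} {G₁ G₂ H : SimpleGraph V} {V₁ V₂ : Set V} {x y : V}

theorem symm (h : Bridge G₁ G₂ H V₁ V₂ x y) : Bridge G₂ G₁ H V₂ V₁ y x where
  disj := h.disj.symm
  hx := h.hy
  hy := h.hx
  h₁ := h.h₂
  h₂ := h.h₁
  adj a b := by rw [h.adj]; tauto

theorem le_left (h : Bridge G₁ G₂ H V₁ V₂ x y) : G₁ ≤ H :=
  fun a b hab => (h.adj a b).2 (Or.inl hab)

open Classical in
/-- The lower bound on distances from `u ∈ V₁`: the would-be distance function is a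
`1`-Lipschitz potential on `H`. -/
theorem potential_le (h : Bridge G₁ G₂ H V₁ V₂ x y) {u : V} (hu : u ∈ V₁) (v : V) :
    (if v ∈ V₁ then G₁.edist u v else G₁.edist u x + 1 + G₂.edist y v) ≤ H.edist u v := by
  have key := edist_potential H
    (fun w => if w ∈ V₁ then G₁.edist u w else G₁.edist u x + 1 + G₂.edist y w) ?_ u v
  · simpa [hu] using key
  have hyn : y ∉ V₁ := fun hy' => Set.disjoint_left.1 h.disj hy' h.hy
  intro a b hab
  rcases (h.adj a b).1 hab with hab | hab | ⟨rfl, rfl⟩ | ⟨rfl, rfl⟩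
  · have := h.h₁ a b hab
    simp only [this.1, this.2, if_true]
    rw [← SimpleGraph.edist_eq_one_iff_adj.2 hab]
    exact SimpleGraph.edist_triangle
  · have hab' := h.h₂ a b hab
    have ha : a ∉ V₁ := fun h' => Set.disjoint_left.1 h.disj h' hab'.1
    have hb : b ∉ V₁ := fun h' => Set.disjoint_left.1 h.disj h' hab'.2
    simp only [ha, hb, if_false]
    rw [add_assoc (G₁.edist u x + 1)]
    gcongr
    rw [← SimpleGraph.edist_eq_one_iff_adj.2 hab]
    exact SimpleGraph.edist_triangle
  · simp [hyn, h.hx]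
  · simp only [hyn, h.hx, if_true, if_false, SimpleGraph.edist_self, add_zero]
    rw [add_assoc]
    exact le_self_add

theorem edist_same (h : Bridge G₁ G₂ H V₁ V₂ x y) {u v : V} (hu : u ∈ V₁) (hv : v ∈ V₁) :
    H.edist u v = G₁.edist u v := by
  refine le_antisymm (SimpleGraph.edist_anti h.le_left) ?_
  simpa [hv] using h.potential_le hu v

theorem edist_cross (h : Bridge G₁ G₂ H V₁ V₂ x y) {u v : V} (hu : u ∈ V₁) (hv : v ∈ V₂) :
    H.edist u v = G₁.edist u x + 1 + G₂.edist y v := by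
  refine le_antisymm ?_ ?_
  · have hxy : H.edist x y = 1 :=
      SimpleGraph.edist_eq_one_iff_adj.2 ((h.adj x y).2 (by simp))
    calc H.edist u v ≤ H.edist u y + H.edist y v := SimpleGraph.edist_triangle
      _ ≤ H.edist u x + H.edist x y + H.edist y v := by
        gcongr; exact SimpleGraph.edist_triangle
      _ = _ := by rw [hxy, h.edist_same hu h.hx, h.symm.edist_same h.hy hv]
  · have hv' : v ∉ V₁ := fun h' => Set.disjoint_left.1 h.disj h' hv
    simpa [hv'] using h.potential_le hu v

theorem dist_same (h : Bridge G₁ G₂ H V₁ V₂ x y) {u v : V} (hu : u ∈ V₁) (hv : v ∈ V₁) :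
    H.dist u v = G₁.dist u v := by
  simp only [SimpleGraph.dist, h.edist_same hu hv]

theorem dist_cross (h : Bridge G₁ G₂ H V₁ V₂ x y) {u v : V} (hu : u ∈ V₁) (hv : v ∈ V₂)
    (hux : G₁.Reachable u x) (hyv : G₂.Reachable y v) :
    H.dist u v = G₁.dist u x + 1 + G₂.dist y v := by
  have := h.edist_cross hu hv
  rw [← hux.coe_dist_eq_edist, ← hyv.coe_dist_eq_edist] at this
  rw [SimpleGraph.dist, this]
  rfl

theorem reachable_cross (h : Bridge G₁ G₂ H V₁ V₂ x y) {u v : V}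
    (hux : G₁.Reachable u x) (hyv : G₂.Reachable y v) : H.Reachable u v :=
  ((hux.mono h.le_left).trans ((h.adj x y).2 (by simp)).reachable).trans
    (hyv.mono h.symm.le_left)

end Bridge

theorem bridge_cons {x : ℕ} {c : KTree} {cs : List KTree}
    (hnd : (node x (c :: cs)).keys.Nodup) :
    Bridge (node x cs).graph c.graph (node x (c :: cs)).graph
      {a | a ∈ (node x cs).keys} {a | a ∈ c.keys} x c.rootKey := by
  have hdis : ∀ a, a ∈ (node x cs).keys → a ∈ c.keys → False := by
    intro a ha hc
    rw [keys_cons, List.nodup_cons, List.nodup_append] at hnd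
    rw [keys_node, List.mem_cons] at ha
    rcases ha with rfl | ha
    · exact hnd.1 (List.mem_append_left _ hc)
    · exact hnd.2.2.2 _ hc _ ha rfl
  have hx : x ∈ (node x cs).keys := rootKey_mem (node x cs)
  have hr := rootKey_mem c
  refine ⟨Set.disjoint_left.2 hdis, hx, hr, ?_, ?_, ?_⟩
  · intro a b hab
    rw [graph_adj] at hab
    rcases hab.2 with h | h
    · exact edges_subset _ _ _ h
    · exact (edges_subset _ _ _ h).symm
  · intro a b hab
    rw [graph_adj] at hab
    rcases hab.2 with h | h
    · exact edges_subset _ _ _ h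
    · exact (edges_subset _ _ _ h).symm
  · intro a b
    have hne : x ≠ c.rootKey := fun h => hdis x hx (h ▸ hr)
    simp only [graph_adj, mem_edges_cons, Prod.mk.injEq]
    constructor
    · rintro ⟨h, h'⟩
      tauto
    · rintro (h | h | ⟨rfl, rfl⟩ | ⟨rfl, rfl⟩)
      · tauto
      · tauto
      · exact ⟨hne, by simp⟩
      · exact ⟨hne.symm, by simp⟩

/-! ### Total distance as a sum over subtrees -/

/-- The sum of `f (size s)` over all rooted subtrees `s` of a tree, the tree itself included. -/
def cost (f : ℕ → ℤ) : KTree → ℤ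
  | node x cs => f (node x cs).size + (cs.attach.map (fun c => c.1.cost f)).sum
decreasing_by
  have := List.sizeOf_lt_of_mem c.2
  simp only [KTree.node.sizeOf_spec]
  omega

theorem cost_node (f : ℕ → ℤ) (x : ℕ) (cs : List KTree) :
    (node x cs).cost f = f (node x cs).size + (cs.map (cost f)).sum := by
  rw [cost, List.attach_map_val (f := cost f)]

theorem size_cons (x : ℕ) (c : KTree) (cs : List KTree) :
    (node x (c :: cs)).size = (node x cs).size + c.size := by
  simp only [size_node, List.map_cons, List.sum_cons]; omega

theorem cost_cons (f : ℕ → ℤ) (x : ℕ) (c : KTree) (cs : List KTree) :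
    (node x (c :: cs)).cost f =
      (node x cs).cost f + c.cost f + f ((node x cs).size + c.size) - f (node x cs).size := by
  rw [cost_node, cost_node, size_cons, List.map_cons, List.sum_cons]; ring

theorem cost_quadratic (N : ℤ) (t : KTree) :
    t.cost (fun s => s * (N - s)) = N * t.cost (fun s => s) - t.cost (fun s => (s : ℤ) ^ 2) := by
  induction t using ind with
  | h0 x => simp [cost_node, size_node]
  | h1 x c cs ihc ihcs =>
    rw [cost_cons, cost_cons, cost_cons, ihc, ihcs]
    push_cast
    ring

theorem card_keys {t : KTree} (h : t.keys.Nodup) : t.keys.toFinset.card = t.size :=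
  List.toFinset_card_of_nodup h

theorem toFinset_cons (x : ℕ) (c : KTree) (cs : List KTree) :
    (node x (c :: cs)).keys.toFinset = (node x cs).keys.toFinset ∪ c.keys.toFinset := by
  ext a
  simp only [keys_node, List.map_cons, List.flatten_cons, List.mem_toFinset, Finset.mem_union,
    List.mem_cons, List.mem_append]
  tauto

/-- Any two nodes of `t` are connected, and the distances from the root and all pairwise distances
have closed forms in the subtree sizes. The three claims are proved together, since hanging a
subtree `c` below a root by a bridge makes each pairwise sum depend on the sums from the roots. -/
theorem distances (t : KTree) (hnd : t.keys.Nodup) :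
    (∀ u ∈ t.keys, ∀ v ∈ t.keys, t.graph.Reachable u v) ∧
    ((∑ v ∈ t.keys.toFinset, t.graph.dist t.rootKey v : ℕ) : ℤ) =
      t.cost (fun s => s) - t.size ∧
    (t.totalDistUniform : ℤ) =
      2 * (t.size * t.cost (fun s => s) - t.cost (fun s => (s : ℤ) ^ 2)) := by
  induction t using ind with
  | h0 x =>
    simp [keys_node, totalDistUniform, dist, cost_node, size_node, rootKey]
  | h1 x c cs ihc ihcs =>
    have hB := bridge_cons hnd
    have hndc : c.keys.Nodup := by
      rw [keys_cons, List.nodup_cons, List.nodup_append] at hnd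
      exact hnd.2.1
    have hndcs : (node x cs).keys.Nodup := by
      rw [keys_cons, List.nodup_cons, List.nodup_append] at hnd
      rw [keys_node, List.nodup_cons]
      exact ⟨fun h => hnd.1 (List.mem_append_right _ h), hnd.2.2.1⟩
    obtain ⟨rc, dc, wc⟩ := ihc hndc
    obtain ⟨rs, ds, ws⟩ := ihcs hndcs
    have kc := card_keys hndc
    have ks := card_keys hndcs
    have hx : x ∈ (node x cs).keys := rootKey_mem (node x cs)
    have hr := rootKey_mem c
    have hmem : ∀ a, a ∈ (node x (c :: cs)).keys ↔ a ∈ (node x cs).keys ∨ a ∈ c.keys := by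
      intro a
      have := congrArg (a ∈ ·) (toFinset_cons x c cs)
      simpa using this
    have hdisj : Disjoint (node x cs).keys.toFinset c.keys.toFinset := by
      rw [Finset.disjoint_left]
      intro a ha hb
      exact Set.disjoint_left.1 hB.disj (List.mem_toFinset.1 ha) (List.mem_toFinset.1 hb)
    change ((∑ v ∈ (node x cs).keys.toFinset, (node x cs).graph.dist x v : ℕ) : ℤ) = _ at ds
    simp only [totalDistUniform, dist] at wc ws
    have d11 : ∀ u ∈ (node x cs).keys.toFinset, ∀ v ∈ (node x cs).keys.toFinset,
        (node x (c :: cs)).graph.dist u v = (node x cs).graph.dist u v :=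
      fun u hu v hv => hB.dist_same (List.mem_toFinset.1 hu) (List.mem_toFinset.1 hv)
    have d22 : ∀ u ∈ c.keys.toFinset, ∀ v ∈ c.keys.toFinset,
        (node x (c :: cs)).graph.dist u v = c.graph.dist u v :=
      fun u hu v hv => hB.symm.dist_same (List.mem_toFinset.1 hu) (List.mem_toFinset.1 hv)
    have d12 : ∀ u ∈ (node x cs).keys.toFinset, ∀ v ∈ c.keys.toFinset,
        (node x (c :: cs)).graph.dist u v =
          (node x cs).graph.dist x u + 1 + c.graph.dist c.rootKey v := by
      intro u hu v hv
      rw [List.mem_toFinset] at hu hv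
      rw [hB.dist_cross hu hv (rs u hu x hx) (rc _ hr v hv), SimpleGraph.dist_comm (u := u)]
    have d21 : ∀ u ∈ c.keys.toFinset, ∀ v ∈ (node x cs).keys.toFinset,
        (node x (c :: cs)).graph.dist u v =
          c.graph.dist c.rootKey u + 1 + (node x cs).graph.dist x v := by
      intro u hu v hv
      rw [SimpleGraph.dist_comm, d12 v hv u hu]; ring
    refine ⟨?_, ?_, ?_⟩
    · intro u hu v hv
      rw [hmem] at hu hv
      rcases hu with hu | hu <;> rcases hv with hv | hv
      · exact (rs u hu v hv).mono hB.le_left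
      · exact hB.reachable_cross (rs u hu x hx) (rc _ hr v hv)
      · exact (hB.reachable_cross (rs v hv x hx) (rc _ hr u hu)).symm
      · exact (rc u hu v hv).mono hB.symm.le_left
    · change ((∑ v ∈ (node x (c :: cs)).keys.toFinset,
        (node x (c :: cs)).graph.dist x v : ℕ) : ℤ) = _
      rw [toFinset_cons, Finset.sum_union hdisj, size_cons, cost_cons,
        Finset.sum_congr rfl (d11 x (List.mem_toFinset.2 hx)),
        Finset.sum_congr rfl (d12 x (List.mem_toFinset.2 hx))]
      simp only [SimpleGraph.dist_self, Finset.sum_add_distrib, Finset.sum_const, kc, smul_eq_mul]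
      push_cast at ds dc ⊢
      rw [ds, dc]
      ring
    · simp only [totalDistUniform, dist]
      rw [toFinset_cons, Finset.sum_union hdisj, size_cons, cost_cons, cost_cons]
      simp only [Finset.sum_union hdisj, Finset.sum_add_distrib]
      rw [Finset.sum_congr rfl (fun u hu => Finset.sum_congr rfl (d11 u hu)),
        Finset.sum_congr rfl (fun u hu => Finset.sum_congr rfl (d12 u hu)),
        Finset.sum_congr rfl (fun u hu => Finset.sum_congr rfl (d21 u hu)),
        Finset.sum_congr rfl (fun u hu => Finset.sum_congr rfl (d22 u hu))]
      simp only [Finset.sum_add_distrib, Finset.sum_const, kc, ks, smul_eq_mul,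
        ← Finset.mul_sum]
      push_cast at ds dc wc ws ⊢
      rw [wc, ws, ds, dc]
      ring

/-- An edge above a subtree of size `s` is used by the `2 s (N - s)` ordered pairs of nodes that
it separates, so the total distance is the sum of these numbers. The term of the root, which
has no edge above it, is zero. -/
theorem totalDistUniform_eq (t : KTree) (hnd : t.keys.Nodup) :
    (t.totalDistUniform : ℤ) = 2 * t.cost (fun s => s * ((t.size : ℤ) - s)) := by
  rw [(distances t hnd).2.2, cost_quadratic]

/-! ### Attaching a leaf and replacing a subtree -/

/-- The sum of the sizes of the subtrees of a tree met along the path at a position,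
from the root to the subtree at that position, both included. -/
def pathSum : KTree → List ℕ → ℕ
  | t, [] => t.size
  | node x cs, i :: is => (node x cs).size + pathSum (cs.getD i default) is

theorem perm_of_getElem? {α : Type*} {l : List α} {i : ℕ} {a : α} (h : l[i]? = some a) :
    l.Perm (a :: l.eraseIdx i) := by
  obtain ⟨hi, rfl⟩ := List.getElem?_eq_some_iff.1 h
  exact (List.getElem_cons_eraseIdx_perm hi).symm

theorem perm_set {α : Type*} {l : List α} {i : ℕ} {a : α} (h : l[i]? = some a) (b : α) :
    (l.set i b).Perm (b :: l.eraseIdx i) :=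
  List.set_perm_cons_eraseIdx (List.getElem?_eq_some_iff.1 h).1 b

theorem map_sum_set {M : Type*} [AddCommGroup M] {cs : List KTree} {i : ℕ} {c : KTree}
    (h : cs[i]? = some c) (d : KTree) (f : KTree → M) :
    ((cs.set i d).map f).sum = (cs.map f).sum - f c + f d := by
  rw [((perm_of_getElem? h).map f).sum_eq, ((perm_set h d).map f).sum_eq]
  simp only [List.map_cons, List.sum_cons]
  abel

theorem flatten_perm {cs ds : List KTree} (h : cs.Perm ds) :
    ((cs.map keys).flatten).Perm (ds.map keys).flatten :=
  (h.map keys).flatten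

theorem size_eq_of_perm {s t : KTree} (h : s.keys.Perm t.keys) : s.size = t.size :=
  h.length_eq

/-- Case analysis on a nonempty valid position. -/
theorem subtreeAt_cons {x i : ℕ} {cs : List KTree} {is : List ℕ} {r : KTree}
    (h : subtreeAt (node x cs) (i :: is) = some r) :
    ∃ c, cs[i]? = some c ∧ cs.getD i default = c ∧ subtreeAt c is = some r := by
  rw [subtreeAt] at h
  cases hc : cs[i]? with
  | none => simp [hc] at h
  | some c => exact ⟨c, rfl, by simp [List.getD, hc], by simpa [hc] using h⟩

theorem attachLeaf_keys (u : ℕ) (pos : List ℕ) (t r : KTree) (h : subtreeAt t pos = some r) :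
    (attachLeaf t pos u).keys.Perm (u :: t.keys) := by
  induction pos generalizing t with
  | nil =>
    obtain ⟨x, cs⟩ := t
    rw [attachLeaf, keys_node, keys_node]
    simp only [List.map_append, List.flatten_append, List.map_cons, List.map_nil, keys_node,
      List.flatten_cons, List.flatten_nil]
    refine List.Perm.trans (List.Perm.cons x ?_) (List.Perm.swap u x _)
    exact List.perm_append_comm
  | cons i is ih =>
    obtain ⟨x, cs⟩ := t
    obtain ⟨c, hc, hc', hr⟩ := subtreeAt_cons h
    rw [attachLeaf, hc', keys_node, keys_node]
    refine List.Perm.trans (List.Perm.cons x ?_) (List.Perm.swap u x _)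
    refine (flatten_perm (perm_set hc _)).trans ?_
    refine List.Perm.trans ?_ (List.Perm.cons u (flatten_perm (perm_of_getElem? hc)).symm)
    simp only [List.map_cons, List.flatten_cons]
    exact (ih c hr).append_right _

theorem attachLeaf_size {u : ℕ} {pos : List ℕ} {t r : KTree} (h : subtreeAt t pos = some r) :
    (attachLeaf t pos u).size = t.size + 1 :=
  (attachLeaf_keys u pos t r h).length_eq

/-- Attaching a leaf raises by one the size `s` of each subtree along the path, which changes
`s * (N - s)` by `N - 1 - 2 * s`; the leaf itself contributes `N - 1`. -/
theorem attachLeaf_cost (N : ℤ) (u : ℕ) (pos : List ℕ) (t r : KTree)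
    (h : subtreeAt t pos = some r) :
    (attachLeaf t pos u).cost (fun s => s * (N - s)) =
      t.cost (fun s => s * (N - s)) + (N - 1) + (pos.length + 1) * (N - 1)
        - 2 * pathSum t pos := by
  induction pos generalizing t with
  | nil =>
    obtain ⟨x, cs⟩ := t
    have hs := attachLeaf_size (u := u) h
    rw [pathSum]
    rw [attachLeaf] at hs ⊢
    rw [cost_node, hs, cost_node]
    simp [cost_node, size_node]
    ring
  | cons i is ih =>
    obtain ⟨x, cs⟩ := t
    have hs := attachLeaf_size (u := u) h
    obtain ⟨c, hc, hc', hr⟩ := subtreeAt_cons h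
    rw [pathSum, hc']
    rw [attachLeaf, hc'] at hs ⊢
    rw [cost_node, hs, cost_node, map_sum_set hc, ih c hr]
    push_cast [List.length_cons]
    ring

theorem replaceAt_keys (r r₀ : KTree) (hr : r.keys.Perm r₀.keys) (pos : List ℕ) (t : KTree)
    (h : subtreeAt t pos = some r₀) : (replaceAt t pos r).keys.Perm t.keys := by
  induction pos generalizing t with
  | nil =>
    rw [subtreeAt, Option.some.injEq] at h
    rw [replaceAt, h]
    exact hr
  | cons i is ih =>
    obtain ⟨x, cs⟩ := t
    obtain ⟨c, hc, hc', hr'⟩ := subtreeAt_cons h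
    rw [replaceAt, hc', keys_node, keys_node]
    refine List.Perm.cons x ((flatten_perm (perm_set hc _)).trans ?_)
    refine List.Perm.trans ?_ (flatten_perm (perm_of_getElem? hc)).symm
    simp only [List.map_cons, List.flatten_cons]
    exact (ih c hr').append_right _

theorem replaceAt_cost (f : ℕ → ℤ) (r r₀ : KTree) (hr : r.keys.Perm r₀.keys) (pos : List ℕ)
    (t : KTree) (h : subtreeAt t pos = some r₀) :
    (replaceAt t pos r).cost f = t.cost f - r₀.cost f + r.cost f := by
  induction pos generalizing t with
  | nil =>
    rw [subtreeAt, Option.some.injEq] at h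
    rw [replaceAt, h]
    ring
  | cons i is ih =>
    have hs := size_eq_of_perm (replaceAt_keys r r₀ hr _ _ h)
    obtain ⟨x, cs⟩ := t
    obtain ⟨c, hc, hc', hr'⟩ := subtreeAt_cons h
    rw [replaceAt, hc'] at hs ⊢
    rw [cost_node, hs, cost_node, map_sum_set hc, ih c hr']
    ring

/-! ### Sizes of trees and of the subtrees along a path -/

theorem height_le_iff (x : ℕ) (cs : List KTree) (m : ℕ) :
    (node x cs).height ≤ m ↔ ∀ c ∈ cs, c.height + 1 ≤ m := by
  rw [height_node]
  induction cs with
  | nil => simp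
  | cons c cs ih => simp only [List.map_cons, List.foldr_cons, max_le_iff, ih, List.forall_mem_cons]

theorem size_lt_of_mem {x : ℕ} {c : KTree} {cs : List KTree} (h : c ∈ cs) :
    c.size + 1 ≤ (node x cs).size := by
  have := List.single_le_sum (l := cs.map size) (by simp) _ (List.mem_map_of_mem h)
  rw [size_node]
  omega

theorem height_lt_size (t : KTree) : t.height + 1 ≤ t.size := by
  induction t using indMem with
  | h x cs ih =>
    have hp := size_pos (node x cs)
    have : (node x cs).height ≤ (node x cs).size - 1 := by
      rw [height_le_iff]
      intro c hc
      have h1 := ih c hc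
      have h2 := size_lt_of_mem (x := x) hc
      omega
    omega

theorem countAt_le_size (t : KTree) (d : ℕ) : t.countAt d ≤ t.size := by
  induction t using indMem generalizing d with
  | h x cs ih =>
    cases d with
    | zero => rw [countAt_zero]; exact size_pos _
    | succ d =>
      rw [countAt_node, size_node]
      have : (cs.map (fun c => c.countAt d)).sum ≤ (cs.map size).sum :=
        List.sum_le_sum (fun c hc => ih c hc d)
      omega

theorem size_le_geom (k : ℕ) (t : KTree) (m : ℕ) (hd : t.DegLE k) (hm : t.height ≤ m) :
    t.size ≤ ∑ d ∈ Finset.range (m + 1), k ^ d := by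
  induction t using indMem generalizing m with
  | h x cs ih =>
    rw [DegLE] at hd
    rw [height_le_iff] at hm
    rw [size_node]
    cases m with
    | zero =>
      have : cs = [] := by
        rw [List.eq_nil_iff_forall_not_mem]
        intro c hc
        have := hm c hc
        omega
      simp [this]
    | succ m =>
      have h1 : (cs.map size).sum ≤ (cs.map size).length • ∑ d ∈ Finset.range (m + 1), k ^ d := by
        apply List.sum_le_card_nsmul
        intro s hs
        obtain ⟨c, hc, rfl⟩ := List.mem_map.1 hs
        have := hm c hc
        exact ih c hc m (hd.2 c hc) (by omega)
      rw [List.length_map, smul_eq_mul] at h1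
      have h2 := Nat.mul_le_mul_right (∑ d ∈ Finset.range (m + 1), k ^ d) hd.1
      rw [geom_sum_succ]
      omega

theorem size_le_two_mul_pow {k : ℕ} (hk : 2 ≤ k) {t : KTree} {m : ℕ} (hd : t.DegLE k)
    (hm : t.height ≤ m) : t.size ≤ 2 * k ^ m := by
  refine (size_le_geom k t m hd hm).trans ?_
  clear hd hm
  induction m with
  | zero => simp
  | succ m ih =>
    rw [Finset.sum_range_succ, pow_succ]
    have := Nat.mul_le_mul_left (k ^ m) hk
    omega

theorem size_le_of_deg_one {t : KTree} {m : ℕ} (hd : t.DegLE 1) (hm : t.height ≤ m) :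
    t.size ≤ m + 1 := by
  simpa using size_le_geom 1 t m hd hm

/-- If every degree-bounded tree of height at most `m` has size at most `g m`, then the subtrees
of `attachLeaf t pos u` that contain the new leaf, the leaf itself excluded, have total size at
most `F m` for every `F` with `F m ≥ g m` and `F (m + 1) ≥ g (m + 1) + F m`. -/
theorem pathSum_le {k : ℕ} (g F : ℕ → ℕ)
    (hg : ∀ (t : KTree) (m : ℕ), t.DegLE k → t.height ≤ m → t.size ≤ g m)
    (h0 : ∀ m, g m ≤ F m) (h1 : ∀ m, g (m + 1) + F m ≤ F (m + 1))
    (u : ℕ) (pos : List ℕ) (t r : KTree) (h : subtreeAt t pos = some r) (m : ℕ)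
    (hd : (attachLeaf t pos u).DegLE k) (hm : (attachLeaf t pos u).height ≤ m) :
    pathSum t pos + (pos.length + 1) ≤ F m := by
  induction pos generalizing t m with
  | nil =>
    have h2 := hg _ m hd hm
    rw [attachLeaf_size h] at h2
    simpa [pathSum] using h2.trans (h0 m)
  | cons i is ih =>
    have h2 := hg _ m hd hm
    rw [attachLeaf_size h] at h2
    obtain ⟨x, cs⟩ := t
    obtain ⟨c, hc, hc', hr⟩ := subtreeAt_cons h
    rw [attachLeaf, hc'] at hd hm
    have hmem : attachLeaf c is u ∈ cs.set i (attachLeaf c is u) :=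
      List.mem_set (List.getElem?_eq_some_iff.1 hc).1 _
    rw [DegLE] at hd
    rw [height_le_iff] at hm
    have h3 := hm _ hmem
    obtain ⟨m, rfl⟩ : ∃ m', m = m' + 1 := ⟨m - 1, by omega⟩
    have h4 := ih c hr m (hd.2 _ hmem) (by omega)
    have h5 := h1 m
    rw [pathSum, hc', List.length_cons]
    omega

theorem length_le_size (pos : List ℕ) (t r : KTree) (h : subtreeAt t pos = some r) :
    pos.length + 1 ≤ t.size := by
  induction pos generalizing t with
  | nil => exact size_pos t
  | cons i is ih =>
    obtain ⟨x, cs⟩ := t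
    obtain ⟨c, hc, hc', hr⟩ := subtreeAt_cons h
    have h1 := ih c hr
    have h2 := size_lt_of_mem (x := x) (List.mem_of_getElem? hc)
    rw [List.length_cons]
    omega

/-- Along a path with `l + 1` nodes the subtree sizes are at least `l + 1, l, …, 1`. -/
theorem le_pathSum (pos : List ℕ) (t r : KTree) (h : subtreeAt t pos = some r) :
    (pos.length + 1) * (pos.length + 2) ≤ 2 * pathSum t pos := by
  induction pos generalizing t with
  | nil => simpa [pathSum] using Nat.mul_le_mul_left 2 (size_pos t)
  | cons i is ih =>
    have h2 := length_le_size _ _ _ h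
    obtain ⟨x, cs⟩ := t
    obtain ⟨c, hc, hc', hr⟩ := subtreeAt_cons h
    have h1 := ih c hr
    rw [pathSum, hc']
    rw [List.length_cons] at h2 ⊢
    nlinarith

/-- The numerical heart of the argument: `a`, `b` are the sums of the subtree sizes along the
paths in `T₀` and in `S`, which have `h₂` and `h₁` nodes. -/
theorem path_inequality {k n h₁ h₂ a b sT sS : ℕ} (hk : 1 ≤ k) (hlt : h₁ < h₂)
    (hn : 9 * k * (sT + sS) ≤ n) (hsT : h₂ + 1 ≤ sT) (hsS : h₁ ≤ sS)
    (hb : h₁ * (h₁ + 1) ≤ 2 * b)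
    (hone : k = 1 → 2 * (a + h₂) ≤ (h₂ + 1) * (h₂ + 2))
    (htwo : 2 ≤ k → a + h₂ ≤ 4 * k * sT) :
    0 < ((h₂ : ℤ) - h₁) * (n - 1) - 2 * a + 2 * b := by
  obtain ⟨d, rfl⟩ : ∃ d, h₂ = h₁ + (d + 1) := ⟨h₂ - h₁ - 1, by omega⟩
  zify at *
  rcases hk.eq_or_lt with hk | hk
  -- For `k = 1` the sums are quadratic in the heights, and `2 * b` must be used to cancel most
  -- of `2 * a`.
  · have h := hone hk.symm
    rw [← hk] at hn
    have hn' : 9 * (2 * h₁ + d + 2 : ℤ) ≤ n := by linarith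
    have := mul_le_mul_of_nonneg_left hn' (show (0 : ℤ) ≤ d + 1 by positivity)
    nlinarith [mul_nonneg (show (0 : ℤ) ≤ d by positivity) (show (0 : ℤ) ≤ h₁ by positivity)]
  · have h := htwo (by omega)
    have hkS : (0 : ℤ) ≤ k * sS := by positivity
    have hkT : (2 : ℤ) * 1 ≤ k * sT := by
      apply mul_le_mul <;> omega
    -- For `k ≥ 2` one unit of height difference already suffices: `2 * a ≤ 8 * k * sT < n - 1`.
    have hn1 : 8 * (k * sT : ℤ) < n - 1 := by nlinarith
    have hn2 : (0 : ℤ) ≤ n - 1 := by nlinarith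
    have hd : (0 : ℤ) ≤ d * (n - 1) := by positivity
    have hb0 : (0 : ℤ) ≤ h₁ * (h₁ + 1) := by positivity
    have : ((h₁ + (d + 1) : ℤ) - h₁) * (n - 1) = d * (n - 1) + (n - 1) := by ring
    rw [this]
    nlinarith

end KTree

/-- push-up lemma: let `G` be a rooted tree on `n` nodes, and let `T` and
`S` be sibling weakly-complete `k`-ary subtrees of `G` (children number `iT`, `iS` of the
node at position `P`).  A push-up operation removes a leaf `u` from the last level of `T`
(so `T = attachLeaf T₀ posT u` with `u` at depth `height T`) and re-attaches it on the
last level of `S` (yielding `S' = attachLeaf S posS u`), where `T` has height `h₂` before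
the move and `S` has height `h₁ = height S'` after the move, with `h₂ > h₁`.  If
`|V(T)| + |V(S)| ≤ n / (9k)` then the push-up strictly decreases the total distance of
the tree under the finite uniform workload. -/
theorem pushUp_decreases_totalDist
    (k n : ℕ) (G : KTree) (hn : G.size = n) (hnd : G.keys.Nodup)
    (P : List ℕ) (x : ℕ) (cs : List KTree)
    (hP : subtreeAt G P = some (node x cs))
    (iT iS : ℕ) (hne : iT ≠ iS)
    (T S : KTree) (hT : cs[iT]? = some T) (hS : cs[iS]? = some S)
    (u : ℕ) (T₀ : KTree) (posT : List ℕ)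
    (hTdecomp : T = attachLeaf T₀ posT u)
    (hposT : (subtreeAt T₀ posT).isSome)
    (hlastT : posT.length + 1 = T.height)
    (posS : List ℕ) (hposS : (subtreeAt S posS).isSome)
    (S' : KTree) (hS' : S' = attachLeaf S posS u)
    (hlastS : posS.length + 1 = S'.height)
    (hwcT : WeaklyComplete k T) (hwcS' : WeaklyComplete k S')
    (hheights : S'.height < T.height)
    (hsize : 9 * k * (T.size + S.size) ≤ n)
    (G' : KTree) (hG' : G' = replaceAt G P (node x ((cs.set iT T₀).set iS S'))) :
    totalDistUniform G' < totalDistUniform G := by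
  obtain ⟨rT, hrT⟩ := Option.isSome_iff_exists.1 hposT
  obtain ⟨rS, hrS⟩ := Option.isSome_iff_exists.1 hposS
  have hTk : T.keys.Perm (u :: T₀.keys) := hTdecomp ▸ attachLeaf_keys u posT T₀ rT hrT
  have hSk : S'.keys.Perm (u :: S.keys) := hS' ▸ attachLeaf_keys u posS S rS hrS
  have hS1 : (cs.set iT T₀)[iS]? = some S := by rw [List.getElem?_set_ne hne, hS]
  have hperm : (node x ((cs.set iT T₀).set iS S')).keys.Perm (node x cs).keys := by
    rw [keys_node, keys_node]
    refine List.Perm.cons x ?_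
    have e1 : ((cs.map keys).flatten).Perm (u :: ((cs.set iT T₀).map keys).flatten) := by
      refine (flatten_perm (perm_of_getElem? hT)).trans ?_
      refine List.Perm.trans ?_ (List.Perm.cons u (flatten_perm (perm_set hT T₀)).symm)
      exact hTk.append_right _
    have e2 : ((((cs.set iT T₀).set iS S').map keys).flatten).Perm
        (u :: ((cs.set iT T₀).map keys).flatten) := by
      refine (flatten_perm (perm_set hS1 S')).trans ?_
      refine List.Perm.trans ?_ (List.Perm.cons u (flatten_perm (perm_of_getElem? hS1)).symm)
      exact hSk.append_right _
    exact e2.trans e1.symm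
  have hGk : G'.keys.Perm G.keys := hG' ▸ replaceAt_keys _ _ hperm P G hP
  have hnd' : G'.keys.Nodup := hGk.nodup_iff.2 hnd
  have hn' : G'.size = n := (size_eq_of_perm hGk).trans hn
  -- `u` moves within the subtree at `P`, so only the subtree sizes strictly below `P` change.
  have hcost := replaceAt_cost (fun s => s * ((n : ℤ) - s)) _ _ hperm P G hP
  rw [← hG', cost_node, cost_node, size_eq_of_perm hperm, map_sum_set hS1, map_sum_set hT]
    at hcost
  have hcT := attachLeaf_cost n u posT T₀ rT hrT
  have hcS := attachLeaf_cost n u posS S rS hrS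
  have hsT := height_lt_size T
  have hsS := length_le_size posS S rS hrS
  rw [← hTdecomp] at hcT
  rw [← hS'] at hcS
  -- With `k = 0` the tree `T` would be a single node, but it has positive height.
  have hk0 : 1 ≤ k := by
    by_contra hk
    obtain rfl : k = 0 := by omega
    have := size_le_geom 0 T T.height hwcT.1 le_rfl
    rw [geom_sum_succ] at this
    omega
  have hkey : 0 < (((posT.length + 1 : ℕ) : ℤ) - ((posS.length + 1 : ℕ) : ℤ)) * (n - 1)
      - 2 * pathSum T₀ posT + 2 * pathSum S posS := by
    refine path_inequality hk0 (by omega) hsize (by omega) hsS (le_pathSum posS S rS hrS) ?_ ?_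
    · rintro rfl
      have hev : ∀ m : ℕ, 2 * ((m + 1) * (m + 2) / 2) = (m + 1) * (m + 2) := fun m =>
        Nat.mul_div_cancel' (Nat.even_mul_succ_self (m + 1)).two_dvd
      have := pathSum_le (k := 1) (fun m => m + 1) (fun m => (m + 1) * (m + 2) / 2)
        (fun t m => size_le_of_deg_one) (fun m => by nlinarith [hev m])
        (fun m => by nlinarith [hev m, hev (m + 1)]) u posT T₀ rT hrT T.height
        (hTdecomp ▸ hwcT.1) (hTdecomp ▸ le_rfl)
      rw [hlastT] at this ⊢
      have := hev T.height
      omega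
    · intro hk
      have h1 := pathSum_le (k := k) (fun m => 2 * k ^ m) (fun m => 4 * k ^ m)
        (fun t m => size_le_two_mul_pow hk) (fun m => by omega)
        (fun m => by
          have := Nat.mul_le_mul_left (k ^ m) hk
          simp only [pow_succ]
          omega)
        u posT T₀ rT hrT T.height (hTdecomp ▸ hwcT.1) (hTdecomp ▸ le_rfl)
      -- The last but one level of `T` is full, so `T` has at least `k ^ (height T - 1)` nodes.
      have h2 := hwcT.2 posT.length (by omega)
      have h3 := countAt_le_size T posT.length
      rw [h2] at h3
      simp only [← hlastT, pow_succ] at h1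
      calc pathSum T₀ posT + (posT.length + 1) ≤ 4 * (k ^ posT.length * k) := h1
        _ ≤ 4 * (T.size * k) := by gcongr
        _ = 4 * k * T.size := by ring
  have hW := totalDistUniform_eq G hnd
  have hW' := totalDistUniform_eq G' hnd'
  rw [hn] at hW
  rw [hn'] at hW'
  zify
  rw [hW, hW']
  push_cast at hkey
  linarith
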